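/- Let $1 < \alpha < 2$, let $\tau > 0$, set $t_k := k\tau$ and $a_k := \frac{\tau^{2-\alpha}}{2-\alpha}\big[(k+1)^{2-\alpha} - k^{2-\alpha}\big]$ for $k \ge 0$, and let $n \ge 1$. If $g \in C^2[0, t_n]$, then $\Big| \int_0^{t_n} \frac{g'(t)}{(t_n - t)^{\alpha - 1}}\,dt - \frac{1}{\tau}\Big[ a_0\, g(t_n) - \sum_{k=1}^{n-1} (a_{n-k-1} - a_{n-k})\, g(t_k) - a_{n-1}\, g(t_0) \Big] \Big| \le \frac{1}{2-\alpha}\Big[ \frac{2-\alpha}{12} + \frac{2^{3-\alpha}}{3-\alpha} - (1 + 2^{1-\alpha}) \Big] \max_{0 \le t \le t_n} |g''(t)| \; \tau^{3-\alpha}$. -/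

import Mathlib

open intervalIntegral MeasureTheory

lemma core (a b : ℝ) (hab : a < b) (F f w : ℝ → ℝ)
    (hF : ∀ s ∈ Set.Icc a b, HasDerivAt F (f s) s)
    (hfc : ContinuousOn f (Set.Icc a b)) (hfm : MonotoneOn f (Set.Icc a b))
    (hwm : MonotoneOn w (Set.Ioo a b)) (hwi : IntervalIntegrable w volume a b) :
    0 ≤ ∫ s in a..b, (f s - (F b - F a) / (b - a)) * w s := by
  obtain ⟨c, hc, hfc'⟩ := exists_hasDerivAt_eq_slope F f hab
    (fun s hs => (hF s hs).continuousAt.continuousWithinAt)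
    (fun s hs => hF s (Set.Ioo_subset_Icc_self hs))
  rw [← hfc']
  have hfi : IntervalIntegrable f volume a b :=
    ContinuousOn.intervalIntegrable (by rwa [Set.uIcc_of_le hab.le])
  have hint : ∫ s in a..b, f s = F b - F a :=
    integral_eq_sub_of_hasDerivAt (by rwa [Set.uIcc_of_le hab.le]) hfi
  have h1 : ∫ s in a..b, (f s - f c) * w c = 0 := by
    rw [intervalIntegral.integral_mul_const, intervalIntegral.integral_sub hfi (by simp), hint, hfc']
    have : b - a ≠ 0 := by linarith
    simp
    left
    field_simp
    ring
  have hg : ContinuousOn (fun s => f s - f c) (Set.uIcc a b) := by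
    rw [Set.uIcc_of_le hab.le]; exact hfc.sub continuousOn_const
  rw [← h1]
  apply intervalIntegral.integral_mono_on_of_le_Ioo hab.le
  · exact (hg.intervalIntegrable).mul_const _
  · exact hwi.continuousOn_mul hg
  · intro s hs
    rcases le_total s c with h | h
    · have := hfm (Set.Ioo_subset_Icc_self hs) (Set.Ioo_subset_Icc_self hc) h
      have := hwm hs hc h
      nlinarith
    · have := hfm (Set.Ioo_subset_Icc_self hc) (Set.Ioo_subset_Icc_self hs) h
      have := hwm hc hs h
      nlinarith

/-- the two-sided bound on one cell -/
lemma cell (a b M : ℝ) (hab : a < b) (g g' g'' w : ℝ → ℝ)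
    (hg : ∀ s ∈ Set.Icc a b, HasDerivAt g (g' s) s)
    (hg' : ∀ s ∈ Set.Icc a b, HasDerivAt g' (g'' s) s)
    (hM : ∀ s ∈ Set.Icc a b, |g'' s| ≤ M)
    (hwm : MonotoneOn w (Set.Ioo a b)) (hwi : IntervalIntegrable w volume a b) :
    |(∫ s in a..b, g' s * w s) - (g b - g a) / (b - a) * ∫ s in a..b, w s|
      ≤ M * ∫ s in a..b, (s - (a + b) / 2) * w s := by
  have hba : b - a ≠ 0 := by linarith
  have hc : ContinuousOn g' (Set.Icc a b) := fun s hs => (hg' s hs).continuousAt.continuousWithinAt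
  have key : ∀ ε : ℝ, |ε| = 1 → 0 ≤ M * (∫ s in a..b, (s - (a + b) / 2) * w s) +
      ε * ((∫ s in a..b, g' s * w s) - (g b - g a) / (b - a) * ∫ s in a..b, w s) := by
    intro ε hε
    have := core a b hab (fun s => M * (s ^ 2 / 2) + ε * g s) (fun s => M * s + ε * g' s) w
      (by
        intro s hs
        have h1 : HasDerivAt (fun s : ℝ => s ^ 2 / 2) s s := by
          simpa using (hasDerivAt_pow 2 s).div_const 2
        exact (h1.const_mul M).add ((hg s hs).const_mul ε))
      ((continuousOn_const.mul continuousOn_id).add (continuousOn_const.mul hc))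
      (by
        have hd : ∀ s ∈ Set.Icc a b,
            HasDerivAt (fun s => M * s + ε * g' s) (M + ε * g'' s) s := by
          intro s hs
          have h5 : HasDerivAt (fun s : ℝ => M * s) M s := by
            simpa using (hasDerivAt_id s).const_mul M
          exact h5.add ((hg' s hs).const_mul ε)
        apply monotoneOn_of_deriv_nonneg (convex_Icc a b)
        · exact fun s hs => (hd s hs).continuousAt.continuousWithinAt
        · intro s hs
          exact (hd s (interior_subset hs)).differentiableAt.differentiableWithinAt
        · intro s hs
          rw [(hd s (interior_subset hs)).deriv]
          have h2 := hM s (interior_subset hs)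
          have h3 : |ε * g'' s| ≤ M := by rw [abs_mul, hε, one_mul]; exact h2
          linarith [(abs_le.1 h3).1])
      hwm hwi
    have hi1 : IntervalIntegrable (fun s => (s - (a + b) / 2) * w s) volume a b :=
      hwi.continuousOn_mul (by fun_prop)
    have hi2 : IntervalIntegrable (fun s => g' s * w s) volume a b :=
      hwi.continuousOn_mul (by rwa [Set.uIcc_of_le hab.le])
    convert this using 1
    rw [← intervalIntegral.integral_const_mul, ← intervalIntegral.integral_const_mul,
      ← intervalIntegral.integral_sub hi2 (hwi.const_mul _),
      ← intervalIntegral.integral_const_mul,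
      ← intervalIntegral.integral_add (hi1.const_mul _) ((hi2.sub (hwi.const_mul _)).const_mul _)]
    congr 1
    ext s
    field_simp
    ring
  rw [abs_le]
  have h1 := key 1 (by simp)
  have h2 := key (-1) (by simp)
  constructor <;> linarith

noncomputable def bb (β j : ℝ) : ℝ :=
  (j + 1 / 2) * (((j + 1) ^ β - j ^ β) / β) - ((j + 1) ^ (β + 1) - j ^ (β + 1)) / (β + 1)

lemma int_x (β j τ : ℝ) (h0 : 0 < β) (hj : 0 ≤ j) (hτ : 0 < τ) :
    ∫ u in (j * τ)..((j + 1) * τ), ((j + 1 / 2) * τ - u) * u ^ (β - 1) = τ ^ (β + 1) * bb β j := by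
  have hi1 : IntervalIntegrable (fun u : ℝ => u ^ (β - 1)) volume (j * τ) ((j + 1) * τ) :=
    intervalIntegral.intervalIntegrable_rpow' (by linarith)
  have hi2 : IntervalIntegrable (fun u : ℝ => u ^ β) volume (j * τ) ((j + 1) * τ) :=
    intervalIntegral.intervalIntegrable_rpow' (by linarith)
  have e : ∫ u in (j * τ)..((j + 1) * τ), ((j + 1 / 2) * τ - u) * u ^ (β - 1)
      = ∫ u in (j * τ)..((j + 1) * τ), ((j + 1 / 2) * τ * u ^ (β - 1) - u ^ β) := by
    apply intervalIntegral.integral_congr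
    intro u hu
    rw [Set.uIcc_of_le (by nlinarith)] at hu
    have hu0 : 0 ≤ u := le_trans (by positivity) hu.1
    have : u ^ β = u * u ^ (β - 1) := by
      conv_lhs => rw [show β = 1 + (β - 1) by ring]
      rw [Real.rpow_add' hu0 (by linarith), Real.rpow_one]
    simp only
    rw [this]; ring
  rw [e, intervalIntegral.integral_sub (hi1.const_mul _) hi2, intervalIntegral.integral_const_mul,
    integral_rpow (Or.inl (by linarith)), integral_rpow (Or.inl (by linarith))]
  rw [Real.mul_rpow (by positivity) hτ.le, Real.mul_rpow (by positivity) hτ.le,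
    Real.mul_rpow (by positivity) hτ.le, Real.mul_rpow (by positivity) hτ.le, bb]
  simp only [sub_add_cancel]
  rw [Real.rpow_add_one hτ.ne']
  ring

lemma bb_int (β j : ℝ) (h0 : 0 < β) (hj : 0 ≤ j) :
    bb β j = ∫ u in j..(j + 1), ((j + 1 / 2) - u) * u ^ (β - 1) := by
  have := int_x β j 1 h0 hj one_pos
  simpa using this.symm

lemma core' (a : ℝ) (w : ℝ → ℝ) 
    (hwm : MonotoneOn w (Set.Ioo a (a + 1))) (hwi : IntervalIntegrable w volume a (a + 1)) :
    0 ≤ ∫ s in a..(a + 1), (s - (a + 1 / 2)) * w s := by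
  have := core a (a + 1) (by linarith) (fun s => s ^ 2 / 2) (fun s => s) w
    (by
      intro s hs
      simpa using (hasDerivAt_pow 2 s).div_const 2) continuousOn_id (fun x _ y _ h => h) hwm hwi
  convert this using 5
  ring

lemma bb_nonneg (β j : ℝ) (h0 : 0 < β) (h1 : β < 1) (hj : 0 ≤ j) : 0 ≤ bb β j := by
  rw [bb_int β j h0 hj]
  have := core' j (fun u => - u ^ (β - 1)) (by
    intro x hx y hy h
    have : 0 < x := lt_of_le_of_lt hj hx.1
    exact neg_le_neg (Real.rpow_le_rpow_of_nonpos this h (by linarith)))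
    (intervalIntegral.intervalIntegrable_rpow' (by linarith)).neg
  convert this using 3
  ring

lemma convex_aux (p : ℝ) (hp : p < 0) : ConvexOn ℝ (Set.Ioi 0) (fun x : ℝ => x ^ p) := by
  have hd : ∀ x ∈ Set.Ioi (0 : ℝ), HasDerivAt (fun x : ℝ => x ^ p) (p * x ^ (p - 1)) x :=
    fun x hx => Real.hasDerivAt_rpow_const (Or.inl (ne_of_gt hx))
  apply MonotoneOn.convexOn_of_deriv (convex_Ioi 0)
  · exact fun x hx => (hd x hx).continuousAt.continuousWithinAt
  · exact fun x hx => (hd x (interior_subset hx)).differentiableAt.differentiableWithinAt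
  · intro x hx y hy h
    rw [(hd x (interior_subset hx)).deriv, (hd y (interior_subset hy)).deriv]
    have hx0 : 0 < x := interior_subset hx
    have := Real.rpow_le_rpow_of_nonpos hx0 h (z := p - 1) (by linarith)
    nlinarith

lemma bb_le (β j : ℝ) (h0 : 0 < β) (h1 : β < 1) (hj : 1 < j) :
    bb β j ≤ 1 / 12 * ((j - 1) ^ (β - 1) - j ^ (β - 1)) := by
  set D := (j - 1) ^ (β - 1) - j ^ (β - 1) with hD
  have hcx : ConvexOn ℝ (Set.Ioi 0) (fun x : ℝ => x ^ (β - 1)) :=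
    convex_aux _ (by linarith)
  have hi1 : IntervalIntegrable (fun u : ℝ => u ^ (β - 1)) volume j (j + 1) :=
    intervalIntegral.intervalIntegrable_rpow' (by linarith)
  have hid : IntervalIntegrable (fun u : ℝ => D * u) volume j (j + 1) :=
    Continuous.intervalIntegrable (by fun_prop) _ _
  have := core' j (fun u => u ^ (β - 1) + D * u) (by
    intro x hx y hy h
    rcases h.eq_or_lt with rfl | h
    · exact le_rfl
    have hx0 := hx.1
    have a1 := hcx.slope_mono_adjacent (x := j - 1) (y := j) (z := x) (by simp; linarith)
      (by simp; linarith) (by linarith) hx.1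
    have a2 := hcx.slope_mono_adjacent (x := j) (y := x) (z := y) (by simp; linarith)
      (by simp; linarith) hx.1 h
    have a3 := a1.trans a2
    simp only [sub_sub_cancel, div_one] at a3
    rw [le_div_iff₀ (by linarith)] at a3
    simp only [hD]
    nlinarith) (hi1.add hid)
  have e : ∫ s in j..(j + 1), (s - (j + 1 / 2)) * (s ^ (β - 1) + D * s)
     = - bb β j + D * ∫ s in j..(j + 1), (s ^ 2 - (j + 1 / 2) * s) := by
    rw [bb_int β j h0 (by linarith), ← intervalIntegral.integral_neg,
      ← intervalIntegral.integral_const_mul, ← intervalIntegral.integral_add]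
    · congr 1; ext s; ring
    · exact (hi1.continuousOn_mul (by fun_prop)).neg
    · exact Continuous.intervalIntegrable (by fun_prop) _ _
  rw [e, intervalIntegral.integral_sub (Continuous.intervalIntegrable (by fun_prop) _ _)
    (Continuous.intervalIntegrable (by fun_prop) _ _), intervalIntegral.integral_const_mul,
    integral_pow, integral_id] at this
  have e2 : ((j + 1) ^ (2 + 1) - j ^ (2 + 1)) / ((2 : ℕ) + 1 : ℝ) - (j + 1 / 2) * (((j + 1) ^ 2 - j ^ 2) / 2)
    = 1 / 12 := by push_cast; ring
  rw [e2] at this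
  linarith

lemma bb_sum' (β : ℝ) (h0 : 0 < β) (h1 : β < 1) (m : ℕ) :
    ∑ j ∈ Finset.range (m + 2), bb β j ≤ bb β 0 + bb β 1 + 1 / 12 * (1 - ((m : ℝ) + 1) ^ (β - 1)) := by
  induction m with
  | zero => simp [Finset.sum_range_succ]
  | succ m ih =>
    rw [Finset.sum_range_succ]
    have := bb_le β ((m + 2 : ℕ) : ℝ) h0 h1 (by push_cast; linarith [(Nat.cast_nonneg m : (0:ℝ) ≤ m)])
    have e : ((m + 2 : ℕ) : ℝ) - 1 = m + 1 := by push_cast; ring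
    rw [e] at this
    have e' : ((m + 1 : ℕ) : ℝ) + 1 = ((m + 2 : ℕ) : ℝ) := by push_cast; ring
    rw [e']
    linarith

lemma bb_sum (β : ℝ) (h0 : 0 < β) (h1 : β < 1) (n : ℕ) :
    ∑ j ∈ Finset.range n, bb β j ≤ bb β 0 + bb β 1 + 1 / 12 := by
  have p0 := bb_nonneg β 0 h0 h1 le_rfl
  have p1 := bb_nonneg β 1 h0 h1 zero_le_one
  match n with
  | 0 => simp; linarith
  | 1 => simp; linarith
  | m + 2 =>
    have := bb_sum' β h0 h1 m
    have : (0:ℝ) ≤ ((m : ℝ) + 1) ^ (β - 1) := by positivity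
    linarith

lemma bb_01 (β : ℝ) (h0 : 0 < β) :
    bb β 0 + bb β 1 + 1 / 12 = (1 / β) * (β / 12 + (2 : ℝ) ^ (β + 1) / (β + 1) - (1 + (2 : ℝ) ^ (β - 1))) := by
  have e1 : (2 : ℝ) ^ (β - 1) = 2 ^ β / 2 := Real.rpow_sub_one (by norm_num) _
  have e2 : (2 : ℝ) ^ (β + 1) = 2 ^ β * 2 := Real.rpow_add_one (by norm_num) _
  have e3 : (1 : ℝ) + 1 = 2 := by norm_num
  have e4 : β + 1 ≠ 0 := by linarith
  simp only [bb, zero_add, e3, Real.zero_rpow h0.ne', Real.zero_rpow e4, Real.one_rpow, e1, e2]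
  field_simp
  ring

lemma abel (a G : ℕ → ℝ) (m : ℕ) :
    a 0 * G (m + 1) - (∑ k ∈ Finset.Icc 1 m, (a (m + 1 - k - 1) - a (m + 1 - k)) * G k) - a m * G 0
      = ∑ k ∈ Finset.range (m + 1), a (m - k) * (G (k + 1) - G k) := by
  have h1 : ∑ k ∈ Finset.range (m + 1), a (m - k) * G (k + 1)
      = ∑ k ∈ Finset.range m, a (m - k) * G (k + 1) + a 0 * G (m + 1) := by
    rw [Finset.sum_range_succ]; simp
  have h2 : ∑ k ∈ Finset.range (m + 1), a (m - k) * G k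
      = ∑ k ∈ Finset.range m, a (m - (k + 1)) * G (k + 1) + a m * G 0 := by
    rw [Finset.sum_range_succ']; simp
  have h3 : ∑ k ∈ Finset.Icc 1 m, (a (m + 1 - k - 1) - a (m + 1 - k)) * G k
      = ∑ k ∈ Finset.range m, (a (m - (k + 1)) - a (m - k)) * G (k + 1) := by
    rw [← Finset.Ico_add_one_right_eq_Icc, Finset.sum_Ico_eq_sum_range]
    simp only [Nat.add_sub_cancel]
    apply Finset.sum_congr rfl
    intro k hk
    rw [show m + 1 - (1 + k) - 1 = m - (k + 1) by omega, show m + 1 - (1 + k) = m - k by omega,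
      add_comm 1 k]
  rw [h3]
  simp only [mul_sub, sub_mul, Finset.sum_sub_distrib]
  rw [h1, h2]; ring

theorem stmt_0 (α τ : ℝ) (hα1 : 1 < α) (hα2 : α < 2) (hτ : 0 < τ)
    (t : ℕ → ℝ) (ht : ∀ k : ℕ, t k = (k : ℝ) * τ)
    (a : ℕ → ℝ)
    (ha : ∀ k : ℕ, a k = τ ^ (2 - α) / (2 - α) * (((k : ℝ) + 1) ^ (2 - α) - (k : ℝ) ^ (2 - α)))
    (n : ℕ) (hn : 1 ≤ n)
    (g g' g'' : ℝ → ℝ)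
    (hg : ∀ s ∈ Set.Icc (0 : ℝ) (t n), HasDerivAt g (g' s) s)
    (hg' : ∀ s ∈ Set.Icc (0 : ℝ) (t n), HasDerivAt g' (g'' s) s)
    (hg'' : ContinuousOn g'' (Set.Icc (0 : ℝ) (t n))) :
    |(∫ s in (0 : ℝ)..(t n), g' s / (t n - s) ^ (α - 1)) -
        (1 / τ) * (a 0 * g (t n) -
          (∑ k ∈ Finset.Icc 1 (n - 1), (a (n - k - 1) - a (n - k)) * g (t k)) -
          a (n - 1) * g (t 0))| ≤
      (1 / (2 - α)) * ((2 - α) / 12 + (2 : ℝ) ^ (3 - α) / (3 - α) - (1 + (2 : ℝ) ^ (1 - α))) *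
        (⨆ s : Set.Icc (0 : ℝ) (t n), |g'' (s : ℝ)|) * τ ^ (3 - α) := by
  obtain ⟨m, rfl⟩ : ∃ m, n = m + 1 := ⟨n - 1, by omega⟩
  set M := ⨆ s : Set.Icc (0 : ℝ) (t (m + 1)), |g'' (s : ℝ)| with hMdef
  obtain ⟨β, rfl⟩ : ∃ β, α = 2 - β := ⟨2 - α, by ring⟩
  have h0 : 0 < β := by linarith
  have h1 : β < 1 := by linarith
  rw [show (3 : ℝ) - (2 - β) = β + 1 by ring, show (2 : ℝ) - (2 - β) = β by ring,
    show (1 : ℝ) - (2 - β) = β - 1 by ring, ← bb_01 β h0]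
  rw [show (2 : ℝ) - (2 - β) = β by ring] at ha
  set T := t (m + 1) with hT
  have hM : ∀ s ∈ Set.Icc (0 : ℝ) T, |g'' s| ≤ M := by
    intro s hs
    have hb : BddAbove (Set.range fun s : Set.Icc (0 : ℝ) T => |g'' (s : ℝ)|) := by
      have := (isCompact_Icc.image_of_continuousOn hg''.abs).bddAbove
      rwa [Set.image_eq_range] at this
    exact le_ciSup hb ⟨s, hs⟩
  have hT' : T = ((m : ℝ) + 1) * τ := by rw [hT, ht]; push_cast; ring
  have hT0 : 0 ≤ T := by rw [hT']; positivity
  have hM0 : 0 ≤ M := (abs_nonneg _).trans (hM 0 ⟨le_rfl, hT0⟩)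
  set w : ℝ → ℝ := fun s => (T - s) ^ (β - 1) with hw
  have hwi : ∀ x y, IntervalIntegrable w volume x y := by
    intro x y
    have h := intervalIntegral.intervalIntegrable_rpow' (a := T - x) (b := T - y) (r := β - 1) (by linarith)
    have := h.comp_sub_left T
    simpa using this
  have hI : ∫ s in (0 : ℝ)..T, g' s / (T - s) ^ (2 - β - 1) = ∫ s in (0 : ℝ)..T, g' s * w s := by
    apply intervalIntegral.integral_congr
    intro s hs
    rw [Set.uIcc_of_le hT0] at hs
    have : 0 ≤ T - s := by linarith [hs.2]
    simp only [hw]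
    rw [show β - 1 = -(2 - β - 1) by ring, Real.rpow_neg this, div_eq_mul_inv]
  have htm : ∀ k, t k < t (k + 1) := by
    intro k; rw [ht, ht]; push_cast; nlinarith
  have hsub : ∀ k < m + 1, Set.Icc (t k) (t (k + 1)) ⊆ Set.Icc 0 T := by
    intro k hk
    apply Set.Icc_subset_Icc
    · rw [ht]; positivity
    · exact (strictMono_nat_of_lt_succ htm).monotone hk
  have ht0 : t 0 = 0 := by rw [ht]; simp
  have hsplit : ∫ s in (0 : ℝ)..T, g' s * w s =
      ∑ k ∈ Finset.range (m + 1), ∫ s in (t k)..(t (k + 1)), g' s * w s := by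
    rw [intervalIntegral.sum_integral_adjacent_intervals, ht0]
    intro k hk
    refine (hwi _ _).continuousOn_mul ?_
    rw [Set.uIcc_of_le (htm k).le]
    exact fun s hs => (hg' s (hsub k hk hs)).continuousAt.continuousWithinAt
  have hTk : ∀ k < m + 1, T - t k = (((m - k : ℕ) : ℝ) + 1) * τ := by
    intro k hk
    rw [hT', ht, Nat.cast_sub (by omega)]; ring
  have hTk' : ∀ k < m + 1, T - t (k + 1) = ((m - k : ℕ) : ℝ) * τ := by
    intro k hk
    rw [hT', ht, Nat.cast_sub (by omega)]; push_cast; ring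
  have hwint : ∀ k < m + 1, ∫ s in (t k)..(t (k + 1)), w s = a (m - k) := by
    intro k hk
    simp only [hw]
    rw [intervalIntegral.integral_comp_sub_left (fun u => u ^ (β - 1)) T, hTk k hk, hTk' k hk,
      integral_rpow (Or.inl (by linarith)), ha, sub_add_cancel,
      Real.mul_rpow (by positivity) hτ.le, Real.mul_rpow (by positivity) hτ.le]
    ring
  have hwint2 : ∀ k < m + 1, ∫ s in (t k)..(t (k + 1)), (s - (t k + t (k + 1)) / 2) * w s
      = τ ^ (β + 1) * bb β ((m - k : ℕ) : ℝ) := by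
    intro k hk
    rw [← int_x β _ τ h0 (by positivity) hτ, ← hTk k hk, ← hTk' k hk,
      ← intervalIntegral.integral_comp_sub_left
        (fun u => ((((m - k : ℕ) : ℝ) + 1 / 2) * τ - u) * u ^ (β - 1)) T]
    congr 1
    ext s
    simp only [hw]
    congr 1
    linarith [hTk k hk, hTk' k hk]
  simp only [Nat.add_sub_cancel]
  have hab := abel a (fun k => g (t k)) m
  simp only [← hT] at hab
  rw [hI, hsplit, hab, Finset.mul_sum, ← Finset.sum_sub_distrib]
  calc _ ≤ ∑ k ∈ Finset.range (m + 1), M * (τ ^ (β + 1) * bb β ((m - k : ℕ) : ℝ)) := by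
        refine (Finset.abs_sum_le_sum_abs _ _).trans (Finset.sum_le_sum ?_)
        intro k hk
        have hk := Finset.mem_range.1 hk
        have := cell (t k) (t (k + 1)) M (htm k) g g' g'' w
          (fun s hs => hg s (hsub k hk hs)) (fun s hs => hg' s (hsub k hk hs))
          (fun s hs => hM s (hsub k hk hs)) (by
            intro x hx y hy hxy
            have hy' : y < T := lt_of_lt_of_le hy.2 (hsub k hk ⟨(htm k).le, le_rfl⟩).2
            exact Real.rpow_le_rpow_of_nonpos (by linarith) (by linarith) (by linarith))
          (hwi _ _)
        rw [hwint k hk, hwint2 k hk, show t (k + 1) - t k = τ by rw [ht, ht]; push_cast; ring] at this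
        have e : 1 / τ * (a (m - k) * (g (t (k + 1)) - g (t k)))
            = (g (t (k + 1)) - g (t k)) / τ * a (m - k) := by ring
        rw [e]
        exact this
    _ = M * τ ^ (β + 1) * ∑ j ∈ Finset.range (m + 1), bb β (j : ℝ) := by
        rw [← Finset.sum_range_reflect, Finset.mul_sum]
        apply Finset.sum_congr rfl
        intro k hk
        have hk := Finset.mem_range.1 hk
        rw [show m - (m + 1 - 1 - k) = k by omega]; ring
    _ ≤ M * τ ^ (β + 1) * (bb β 0 + bb β 1 + 1 / 12) :=
        mul_le_mul_of_nonneg_left (bb_sum β h0 h1 _) (by positivity)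
    _ = _ := by ring
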